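/- For every n ≥ 1 and m = n + 1, there exists a uniquely optimal graph in G_{n,m}: the balanced θ-graph with m edges, i.e. the weak subdivision of the 3-dipole whose three chain lengths differ pairwise by at most one. Explicitly, writing the chain lengths ℓ₁, ℓ₂, ℓ₃ with ℓ₁ + ℓ₂ + ℓ₃ = m, this θ-graph has R(G,p) = p^m + m p^{m−1}(1−p) + (ℓ₁ℓ₂ + ℓ₁ℓ₃ + ℓ₂ℓ₃) p^{m−2}(1−p)², and the coefficient ℓ₁ℓ₂ + ℓ₁ℓ₃ + ℓ₂ℓ₃ is maximized exactly when the chains are balanced. -/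

import Mathlib

open Classical Finset

noncomputable section

/-- A finite multigraph: edges carry two (possibly equal) endpoints. -/
structure Multigraph where
  V : Type
  E : Type
  [fintV : Fintype V]
  [fintE : Fintype E]
  src : E → V
  tgt : E → V

attribute [instance] Multigraph.fintV Multigraph.fintE

namespace Multigraph

variable (G : Multigraph)

/-- Number of vertices. -/
def nV : ℕ := Fintype.card G.V

/-- Number of edges (with multiplicity). -/
def nE : ℕ := Fintype.card G.E

/-- One step along an edge belonging to the edge set `S`. -/
def stepOn (S : Finset G.E) (u v : G.V) : Prop :=
  ∃ e ∈ S, (G.src e = u ∧ G.tgt e = v) ∨ (G.src e = v ∧ G.tgt e = u)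

/-- The spanning subgraph with edge set `S` is connected. -/
def ConnOn (S : Finset G.E) : Prop :=
  ∀ u v : G.V, Relation.ReflTransGen (G.stepOn S) u v

/-- `G` is connected. -/
def Connected : Prop := G.ConnOn Finset.univ

/-- The edge set `F` disconnects `G` (i.e. is a disconnection). -/
def Disconnects (F : Finset G.E) : Prop := ¬ G.ConnOn (Finset.univ \ F)

/-- `d i G`: the number of `i`-disconnections of `G`. -/
def d (i : ℕ) : ℕ :=
  ((Finset.univ : Finset (Finset G.E)).filter fun F => F.card = i ∧ G.Disconnects F).card

/-- The all-terminal reliability `R(G,p)`: each edge is independently retained with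
probability `p`; this is the probability that the retained spanning subgraph is connected. -/
def rel (p : ℝ) : ℝ :=
  ∑ S : Finset G.E, if G.ConnOn S then p ^ S.card * (1 - p) ^ (G.nE - S.card) else 0

/-- `e` is a bridge. -/
def IsBridge (e : G.E) : Prop := G.Disconnects {e}

def Bridgeless : Prop := ∀ e : G.E, ¬ G.IsBridge e

/-- The number of spanning trees of `G` (connected spanning subgraphs with `nV - 1` edges). -/
def treeCount : ℕ :=
  ((Finset.univ : Finset (Finset G.E)).filter fun S => S.card + 1 = G.nV ∧ G.ConnOn S).card

/-- The edge-connectivity: the least size of a disconnecting set of edges. -/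
def edgeConnectivity : ℕ :=
  sInf {i : ℕ | ∃ F : Finset G.E, F.card = i ∧ G.Disconnects F}

/-- Degree of a vertex (a loop counts twice). -/
def deg (v : G.V) : ℕ :=
  (Finset.univ.filter fun e => G.src e = v).card +
    (Finset.univ.filter fun e => G.tgt e = v).card

/-- The edges crossing the vertex set `A`. -/
def cutEdges (A : Finset G.V) : Finset G.E :=
  Finset.univ.filter fun e =>
    (G.src e ∈ A ∧ G.tgt e ∉ A) ∨ (G.src e ∉ A ∧ G.tgt e ∈ A)

/-- `F` is a cut: the set of edges crossing a nontrivial bipartition of the vertices. -/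
def IsCut (F : Finset G.E) : Prop :=
  ∃ A : Finset G.V, A.Nonempty ∧ A ≠ Finset.univ ∧ F = G.cutEdges A

/-- `F` is a bond: a minimal cut. -/
def IsBond (F : Finset G.E) : Prop :=
  G.IsCut F ∧ ∀ F' ⊆ F, G.IsCut F' → F' = F

/-- Number of `s`-bonds of `G`. -/
def bondCount (s : ℕ) : ℕ :=
  ((Finset.univ : Finset (Finset G.E)).filter fun F => F.card = s ∧ G.IsBond F).card

/-- Adjacency of vertices. -/
def Adj (u v : G.V) : Prop :=
  ∃ e : G.E, (G.src e = u ∧ G.tgt e = v) ∨ (G.src e = v ∧ G.tgt e = u)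

/-- `G` is simple: no loops and no parallel edges. -/
def IsSimple : Prop :=
  (∀ e : G.E, G.src e ≠ G.tgt e) ∧
    ∀ e f : G.E,
      ((G.src e = G.src f ∧ G.tgt e = G.tgt f) ∨ (G.src e = G.tgt f ∧ G.tgt e = G.src f)) →
        e = f

end Multigraph

/-- `G ∈ 𝒢_{n,m}`: connected with `n` vertices and `m` edges. -/
def memG (G : Multigraph) (n m : ℕ) : Prop :=
  G.nV = n ∧ G.nE = m ∧ G.Connected

/-- Isomorphism of multigraphs. -/
structure MGIso (G H : Multigraph) where
  vMap : G.V ≃ H.V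
  eMap : G.E ≃ H.E
  ends_eq : ∀ e : G.E,
    (H.src (eMap e) = vMap (G.src e) ∧ H.tgt (eMap e) = vMap (G.tgt e)) ∨
    (H.src (eMap e) = vMap (G.tgt e) ∧ H.tgt (eMap e) = vMap (G.src e))

def IsIso (G H : Multigraph) : Prop := Nonempty (MGIso G H)

/-- `G` is `p`-optimal in `𝒢_{n,m}`. -/
def pOptimal (G : Multigraph) (n m : ℕ) (p : ℝ) : Prop :=
  memG G n m ∧ ∀ H : Multigraph, memG H n m → H.rel p ≤ G.rel p

/-- `G` is uniquely optimal in `𝒢_{n,m}`: strictly more reliable than every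
non-isomorphic member, for every `p ∈ (0,1)`. -/
def UniquelyOptimal (G : Multigraph) (n m : ℕ) : Prop :=
  memG G n m ∧ ∀ H : Multigraph, memG H n m → ¬ IsIso G H →
    ∀ p : ℝ, 0 < p → p < 1 → H.rel p < G.rel p

noncomputable instance quotFintype {α : Type} [Fintype α] {r : α → α → Prop} :
    Fintype (Quot r) :=
  letI := Classical.decEq (Quot r)
  Fintype.ofSurjective (Quot.mk r) fun q => Quot.exists_rep q

/-- Identification of the endpoints of zero-weight edges. -/
def zeroRel (D : Multigraph) (w : D.E → ℕ) : D.V → D.V → Prop :=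
  fun u v => ∃ e : D.E, w e = 0 ∧ D.src e = u ∧ D.tgt e = v

/-- The `j`-th node along the chain replacing the edge `e` (whose chain has `w e` edges). -/
def chainNode (D : Multigraph) (w : D.E → ℕ) (e : D.E) (j : ℕ) :
    Quot (zeroRel D w) ⊕ (Σ f : D.E, Fin (w f - 1)) :=
  if h : 0 < j ∧ j < w e then Sum.inr ⟨e, ⟨j - 1, by omega⟩⟩
  else if j = 0 then Sum.inl (Quot.mk _ (D.src e))
  else Sum.inl (Quot.mk _ (D.tgt e))

/-- The weak subdivision of `D` determined by the chain lengths `w`: each edge `e` is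
replaced by a chain with `w e` edges; zero-weight edges are contracted. -/
def subdivide (D : Multigraph) (w : D.E → ℕ) : Multigraph where
  V := Quot (zeroRel D w) ⊕ (Σ f : D.E, Fin (w f - 1))
  E := Σ f : D.E, Fin (w f)
  src f := chainNode D w f.1 f.2.val
  tgt f := chainNode D w f.1 (f.2.val + 1)

/-- The zero-weight edges contain no cycle (no "zero cycle"): they form a forest. -/
def ZeroAcyclic (D : Multigraph) (w : D.E → ℕ) : Prop :=
  Fintype.card (Quot (zeroRel D w)) +
      (Finset.univ.filter fun e : D.E => w e = 0).card = Fintype.card D.V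

/-- `G` is a weak subdivision of `D` with chain lengths `w`. -/
def IsWeakSubdivision (G D : Multigraph) (w : D.E → ℕ) : Prop :=
  ZeroAcyclic D w ∧ IsIso G (subdivide D w)

/-- `D` is a weak distillation of `G`. -/
def IsWeakDistillation (D G : Multigraph) : Prop :=
  ∃ w : D.E → ℕ, IsWeakSubdivision G D w

/-- The chain lengths differ pairwise by at most one. -/
def BalancedWeights {E : Type} (w : E → ℕ) : Prop := ∀ e f : E, w e ≤ w f + 1

/-- `D ∈ 𝒟_k`: connected, cubic, 3-edge-connected, of exceedance `k`. -/
def memDk (k : ℕ) (D : Multigraph) : Prop :=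
  D.Connected ∧ (∀ v : D.V, D.deg v = 3) ∧
    (∀ F : Finset D.E, D.Disconnects F → 3 ≤ F.card) ∧ D.nE = D.nV + k

/-- Identification of the two endpoints of the edge `e`. -/
def contractRel (G : Multigraph) (e : G.E) : G.V → G.V → Prop :=
  fun u v => u = G.src e ∧ v = G.tgt e

/-- Contraction of the edge `e`. -/
def Multigraph.contract (G : Multigraph) (e : G.E) : Multigraph :=
  letI := Classical.decEq G.E
  { V := Quot (contractRel G e)
    E := {f : G.E // f ≠ e}
    src := fun f => Quot.mk _ (G.src f.1)
    tgt := fun f => Quot.mk _ (G.tgt f.1) }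

/-- `G'` is obtained from `G` by shifting an edge: in an intermediate graph `H`
(the expansion of `G` at a vertex by the new edge `e'`), the edges `e, e'` form a
2-bond; contracting `e'` gives back `G`, while contracting `e` gives `G'`. -/
def IsShiftOf (G G' : Multigraph) : Prop :=
  ∃ (H : Multigraph) (e e' : H.E), e ≠ e' ∧
    H.src e ≠ H.tgt e ∧ H.src e' ≠ H.tgt e' ∧
    H.IsBond {e, e'} ∧
    IsIso (H.contract e') G ∧ IsIso (H.contract e) G'

/-- Equivalence of graphs: repeated edge shifting. -/
def EquivalentGraphs (G G' : Multigraph) : Prop :=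
  Relation.ReflTransGen IsShiftOf G G'

/-- `G'` is obtained from `G` by moving the (non-loop) edge `e`: contracting `e` and
expanding a new edge, identified with `e` via `φ`, at an arbitrary vertex.
Equivalently, `G/e` and `G'/φ e` agree, compatibly with the edge identification `φ`. -/
def MovedEdge (G G' : Multigraph) (φ : G.E ≃ G'.E) (e : G.E) : Prop :=
  G.src e ≠ G.tgt e ∧ G'.src (φ e) ≠ G'.tgt (φ e) ∧
  ∃ ψ : Quot (contractRel G e) ≃ Quot (contractRel G' (φ e)),
    ∀ f : G.E, f ≠ e →
      ((ψ (Quot.mk _ (G.src f)) = Quot.mk _ (G'.src (φ f)) ∧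
        ψ (Quot.mk _ (G.tgt f)) = Quot.mk _ (G'.tgt (φ f))) ∨
       (ψ (Quot.mk _ (G.src f)) = Quot.mk _ (G'.tgt (φ f)) ∧
        ψ (Quot.mk _ (G.tgt f)) = Quot.mk _ (G'.src (φ f))))

/-- Move one edge from the chain `a` to the chain `b`. -/
def moveWeight {E : Type} (w : E → ℕ) (a b : E) : E → ℕ :=
  fun g => if g = b then w b + 1 else if g = a then w a - 1 else w g

/-- The chains of maximal length. -/
def maxChains (D : Multigraph) (w : D.E → ℕ) : Finset D.E :=
  Finset.univ.filter fun e => ∀ f : D.E, w f ≤ w e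

/-- The chains of minimal length. -/
def minChains (D : Multigraph) (w : D.E → ℕ) : Finset D.E :=
  Finset.univ.filter fun e => ∀ f : D.E, w e ≤ w f

/-- Degree of `v` within the edge set `S`. -/
def degIn (D : Multigraph) (S : Finset D.E) (v : D.V) : ℕ :=
  (S.filter fun e => D.src e = v).card + (S.filter fun e => D.tgt e = v).card

/-- `S` is a matching (pairwise non-adjacent edges). -/
def IsMatchingIn (D : Multigraph) (S : Finset D.E) : Prop := ∀ v : D.V, degIn D S v ≤ 1

/-- `S` is a path with three edges. -/
def IsPath3In (D : Multigraph) (S : Finset D.E) : Prop :=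
  S.card = 3 ∧ (∀ v : D.V, degIn D S v ≤ 2) ∧
    (Finset.univ.filter fun v : D.V => degIn D S v = 1).card = 2

/-- `S` is the disjoint union of a path with three edges and a single edge. -/
def IsPath3PlusEdgeIn (D : Multigraph) (S : Finset D.E) : Prop :=
  S.card = 4 ∧ (∀ v : D.V, degIn D S v ≤ 2) ∧
    (Finset.univ.filter fun v : D.V => degIn D S v = 1).card = 4 ∧
    ∃ e ∈ S, degIn D S (D.src e) = 2 ∧ degIn D S (D.tgt e) = 2

/-- `S` is the disjoint union of two paths with two edges each. -/
def IsTwoPlusTwoIn (D : Multigraph) (S : Finset D.E) : Prop :=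
  S.card = 4 ∧ (∀ v : D.V, degIn D S v ≤ 2) ∧
    (Finset.univ.filter fun v : D.V => degIn D S v = 1).card = 4 ∧
    ∀ e ∈ S, degIn D S (D.src e) = 1 ∨ degIn D S (D.tgt e) = 1

/-- Two edges sharing a vertex. -/
def AdjEdges (D : Multigraph) (a b : D.E) : Prop :=
  ∃ v : D.V, (D.src a = v ∨ D.tgt a = v) ∧ (D.src b = v ∨ D.tgt b = v)

/-- The number of incidences of edges of weight `c` at the vertex `u`. -/
def incCount (D : Multigraph) (w : D.E → ℕ) (u : D.V) (c : ℕ) : ℕ :=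
  (Finset.univ.filter fun e : D.E => D.src e = u ∧ w e = c).card +
    (Finset.univ.filter fun e : D.E => D.tgt e = u ∧ w e = c).card

/-- The `π^v`-value of the vertex `u`: the number of incident edges of weight `q + 1`
minus the number of incident edges of weight `q - 1`. -/
def piV (D : Multigraph) (w : D.E → ℕ) (q : ℕ) (u : D.V) : ℤ :=
  (incCount D w u (q + 1) : ℤ) -
    (if q = 0 then 0 else (incCount D w u (q - 1) : ℤ))

/-- The `π^v`-values are balanced: pairwise differences at most one. -/
def BalancedPiV (D : Multigraph) (w : D.E → ℕ) (q : ℕ) : Prop :=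
  ∀ u v : D.V, piV D w q u ≤ piV D w q v + 1

/-- The standard weight `q`, where `m = 3kq + r` with `-3k/2 < r ≤ 3k/2`. -/
def stdWeight (m k : ℕ) : ℕ := (2 * m + 3 * k - 1) / (6 * k)

/-- `w` is a balanced weighting of `D` of total size `m` (the implied weak
subdivision is the generic member of `ℬ_m(D)`). -/
def IsBalancedWeighting (D : Multigraph) (w : D.E → ℕ) (m : ℕ) : Prop :=
  (∑ e : D.E, w e) = m ∧ BalancedWeights w ∧ ZeroAcyclic D w

/-- Every 3-bond of `D` is trivial (consists of the three edges at a single vertex). -/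
def OnlyTrivialThreeBonds (D : Multigraph) : Prop :=
  ∀ F : Finset D.E, D.IsBond F → F.card = 3 →
    ∃ u : D.V, F = Finset.univ.filter fun e => D.src e = u ∨ D.tgt e = u

/-- The 3-dipole: two vertices joined by three parallel edges. -/
def dipole3 : Multigraph where
  V := Fin 2
  E := Fin 3
  src _ := 0
  tgt _ := 1

/-- The complete graph `K₄`. -/
def K4 : Multigraph where
  V := Fin 4
  E := {p : Fin 4 × Fin 4 // p.1 < p.2}
  src p := p.1.1
  tgt p := p.1.2

/-- The complete bipartite graph `K_{3,3}`. -/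
def K33 : Multigraph where
  V := Fin 3 ⊕ Fin 3
  E := Fin 3 × Fin 3
  src p := Sum.inl p.1
  tgt p := Sum.inr p.2

/-- The triangular prism `Π₃`; the edges `Sum.inr i` are the rungs. -/
def prism : Multigraph where
  V := Fin 3 × Bool
  E := (Fin 3 × Bool) ⊕ Fin 3
  src := fun e => match e with
    | Sum.inl (i, b) => (i, b)
    | Sum.inr i => (i, false)
  tgt := fun e => match e with
    | Sum.inl (i, b) => (i + 1, b)
    | Sum.inr i => (i, true)

/-- The Wagner graph (the 4-Möbius ladder): the edges `Sum.inl i` are the rails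
(the 8-cycle) and the edges `Sum.inr j` are the rungs. -/
def wagner : Multigraph where
  V := Fin 8
  E := Fin 8 ⊕ Fin 4
  src := fun e => match e with
    | Sum.inl i => i
    | Sum.inr j => ⟨j.val, by omega⟩
  tgt := fun e => match e with
    | Sum.inl i => i + 1
    | Sum.inr j => ⟨j.val + 4, by omega⟩

/-- The Petersen graph. -/
def petersen : Multigraph where
  V := Fin 5 × Bool
  E := Fin 5 ⊕ Fin 5 ⊕ Fin 5
  src := fun e => match e with
    | Sum.inl i => (i, false)
    | Sum.inr (Sum.inl i) => (i, false)
    | Sum.inr (Sum.inr i) => (i, true)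
  tgt := fun e => match e with
    | Sum.inl i => (i + 1, false)
    | Sum.inr (Sum.inl i) => (i, true)
    | Sum.inr (Sum.inr i) => (i + 2, true)

/-!
A connected graph with `n` vertices and `n + 1` edges stays connected only if at most two edges are
deleted, so its reliability is determined by the number of its edges that are not bridges and by the
number of its spanning trees, and increases with both.

A bridgeless such graph is a θ-graph: some vertex has degree two unless the graph has a single
vertex or is the 3-dipole, and contracting an edge at a vertex of degree two shortens a chain.
Deleting two edges of a θ-graph leaves a spanning tree exactly when they lie on different chains, so
the spanning trees number `m.choose 2 - ∑ i, (w i).choose 2`, which by convexity is largest exactly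
for balanced chain lengths `w`. Contracting a bridge preserves the spanning trees, so a graph with
bridges has no more of them than some θ-graph with the same number of edges, and it has fewer edges
that are not bridges.
-/

/-! ### Connectivity and cuts -/

namespace Multigraph

variable {G : Multigraph}

/-- The endpoints of the edge `e` are `x` and `y`, in either order. -/
def Joins (G : Multigraph) (e : G.E) (x y : G.V) : Prop :=
  (G.src e = x ∧ G.tgt e = y) ∨ (G.src e = y ∧ G.tgt e = x)

theorem Joins.symm {e : G.E} {x y : G.V} (h : G.Joins e x y) : G.Joins e y x :=
  Or.symm h

theorem joins_src_tgt (e : G.E) : G.Joins e (G.src e) (G.tgt e) :=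
  .inl ⟨rfl, rfl⟩

theorem Joins.iff_iff {e : G.E} {x y : G.V} (h : G.Joins e x y) (φ : G.V → Prop) :
    (φ (G.src e) ↔ φ (G.tgt e)) ↔ (φ x ↔ φ y) := by
  rcases h with ⟨rfl, rfl⟩ | ⟨rfl, rfl⟩
  exacts [Iff.rfl, iff_comm]

theorem connOn_iff_forall_iff {S : Finset G.E} :
    G.ConnOn S ↔ ∀ φ : G.V → Prop, (∀ e ∈ S, φ (G.src e) ↔ φ (G.tgt e)) →
      ∀ u v, φ u ↔ φ v := by
  constructor
  · intro h φ hφ u v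
    induction h u v with
    | refl => rfl
    | tail _ hstep ih =>
      obtain ⟨e, he, hj⟩ := hstep
      exact ih.trans ((Joins.iff_iff hj φ).1 (hφ e he))
  · intro h u v
    refine (h (Relation.ReflTransGen (G.stepOn S) u) (fun e he => ?_) u v).1 .refl
    exact ⟨fun hr => hr.tail ⟨e, he, .inl ⟨rfl, rfl⟩⟩, fun hr => hr.tail ⟨e, he, .inr ⟨rfl, rfl⟩⟩⟩

theorem ConnOn.mono {S T : Finset G.E} (h : G.ConnOn S) (hST : S ⊆ T) : G.ConnOn T := by
  rw [connOn_iff_forall_iff] at h ⊢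
  exact fun φ hφ => h φ fun e he => hφ e (hST he)

theorem ConnOn.exists_mem_cutEdges {S : Finset G.E} (h : G.ConnOn S) {A : Finset G.V}
    (hA : A.Nonempty) (hA' : A ≠ univ) : ∃ e ∈ S, e ∈ G.cutEdges A := by
  by_contra! hcut
  obtain ⟨u, hu⟩ := hA
  refine hA' (eq_univ_of_forall fun v => ?_)
  refine (connOn_iff_forall_iff.1 h (· ∈ A) (fun e he => ?_) u v).1 hu
  have := hcut e he
  simp only [cutEdges, mem_filter, mem_univ, true_and] at this
  tauto

theorem two_le_card_cutEdges (hc : G.Connected) (hb : G.Bridgeless) {A : Finset G.V}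
    (hA : A.Nonempty) (hA' : A ≠ univ) : 2 ≤ #(G.cutEdges A) := by
  obtain ⟨e, -, he⟩ := hc.exists_mem_cutEdges hA hA'
  obtain ⟨f, hfe, hf⟩ := (not_not.1 (hb e)).exists_mem_cutEdges hA hA'
  have hne : f ≠ e := by simpa using hfe
  exact one_lt_card.2 ⟨f, hf, e, he, hne⟩

theorem ConnOn.nV_le {S : Finset G.E} (h : G.ConnOn S) : G.nV ≤ #S + 1 := by
  rcases isEmpty_or_nonempty G.V with _ | _
  · simp [nV]
  let Γ : SimpleGraph G.V := SimpleGraph.fromRel (G.stepOn S)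
  have hΓ : Γ.Connected := by
    refine .mk fun u v => ?_
    induction h u v with
    | refl => rfl
    | @tail b c _ hbc ih =>
      by_cases hne : b = c
      · exact hne ▸ ih
      · exact ih.trans (SimpleGraph.Adj.reachable
          ((SimpleGraph.fromRel_adj _ _ _).2 ⟨hne, .inl hbc⟩))
  have hsub : Γ.edgeSet ⊆ (S.image fun e => s(G.src e, G.tgt e) : Finset (Sym2 G.V)) := by
    rintro ⟨a, b⟩ hab
    obtain ⟨-, ⟨e, he, hj⟩ | ⟨e, he, hj⟩⟩ := (SimpleGraph.fromRel_adj _ _ _).1 hab <;>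
      simp only [coe_image, Set.mem_image, mem_coe] <;>
      exact ⟨e, he, Sym2.eq_iff.2 (by tauto)⟩
  calc G.nV = Nat.card G.V := Nat.card_eq_fintype_card.symm
    _ ≤ Γ.edgeSet.ncard + 1 := hΓ.card_vert_le_card_edgeSet_add_one
    _ ≤ #(S.image fun e => s(G.src e, G.tgt e)) + 1 := by
      gcongr
      exact (Set.ncard_le_ncard hsub (finite_toSet _)).trans_eq (Set.ncard_coe_finset _)
    _ ≤ #S + 1 := by gcongr; exact card_image_le

theorem IsBridge.src_ne_tgt {e : G.E} (he : G.IsBridge e) (hc : G.Connected) :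
    G.src e ≠ G.tgt e := by
  intro hloop
  refine he (connOn_iff_forall_iff.2 fun φ hφ => connOn_iff_forall_iff.1 hc φ fun f _ => ?_)
  by_cases hfe : f = e
  · rw [hfe, hloop]
  · exact hφ f (by simpa using hfe)

theorem sum_deg : ∑ v, G.deg v = 2 * G.nE := by
  simp only [deg, sum_add_distrib]
  rw [← card_eq_sum_card_fiberwise (f := G.src) fun _ _ => mem_univ _,
    ← card_eq_sum_card_fiberwise (f := G.tgt) fun _ _ => mem_univ _, nE, ← card_univ, two_mul]

theorem mem_cutEdges_singleton {e : G.E} {v : G.V} :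
    e ∈ G.cutEdges {v} ↔ ∃ y ≠ v, G.Joins e v y := by
  simp only [cutEdges, mem_filter, mem_univ, true_and, mem_singleton, Joins]
  constructor
  · rintro (⟨h, h'⟩ | ⟨h, h'⟩)
    exacts [⟨_, h', .inl ⟨h, rfl⟩⟩, ⟨_, h, .inr ⟨rfl, h'⟩⟩]
  · rintro ⟨y, hy, ⟨h, rfl⟩ | ⟨rfl, h⟩⟩
    exacts [.inl ⟨h, hy⟩, .inr ⟨hy, h⟩]

theorem deg_eq_card_cutEdges_add (v : G.V) :
    G.deg v = #(G.cutEdges {v}) + 2 * #{e | G.src e = v ∧ G.tgt e = v} := by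
  have hsrc := card_filter_add_card_filter_not (s := {e | G.src e = v}) fun e => G.tgt e = v
  have htgt := card_filter_add_card_filter_not (s := {e | G.tgt e = v}) fun e => G.src e = v
  have hcut : #(G.cutEdges {v}) =
      #{e | G.src e = v ∧ ¬ G.tgt e = v} + #{e | G.tgt e = v ∧ ¬ G.src e = v} := by
    rw [← card_union_of_disjoint (disjoint_filter.2 fun e _ h h' => h.2 h'.1), ← filter_or]
    congr 1
    ext e
    simp only [cutEdges, mem_filter, mem_univ, true_and, mem_singleton]
    tauto
  have hloop : #{e | G.tgt e = v ∧ G.src e = v} = #{e | G.src e = v ∧ G.tgt e = v} := by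
    simp only [and_comm]
  rw [filter_filter, filter_filter] at hsrc htgt
  rw [deg, hcut]
  lia

end Multigraph

/-! ### Reliability of graphs of exceedance one -/

namespace Multigraph

variable {G : Multigraph}

theorem rel_eq_sum_card (p : ℝ) :
    G.rel p = ∑ k ∈ range (G.nE + 1),
      #{S | #S = k ∧ G.ConnOn S} * (p ^ k * (1 - p) ^ (G.nE - k)) := by
  have hmaps : ∀ S ∈ ({S | G.ConnOn S} : Finset (Finset G.E)), #S ∈ range (G.nE + 1) :=
    fun S _ => mem_range_succ_iff.2 (card_le_univ S)
  rw [rel, ← sum_filter, ← sum_fiberwise_of_maps_to hmaps]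
  refine sum_congr rfl fun k _ => ?_
  rw [filter_filter, ← nsmul_eq_mul, ← sum_const]
  simp only [and_comm (a := G.ConnOn _)]
  exact sum_congr rfl fun S hS => by rw [(mem_filter.1 hS).2.1]

theorem card_connOn_eq_card_not_isBridge :
    #{S | #S + 1 = G.nE ∧ G.ConnOn S} = #{e | ¬ G.IsBridge e} := by
  refine (card_bij (fun e _ => univ \ {e}) (fun e he => ?_) (fun e _ f _ hef => ?_)
    fun S hS => ?_).symm
  · have hcard : #(univ \ {e}) + 1 = G.nE := card_sdiff_add_card_eq_card (subset_univ {e})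
    exact mem_filter.2 ⟨mem_univ _, hcard, not_not.1 (mem_filter.1 he).2⟩
  · simpa only [← compl_eq_univ_sdiff, compl_inj_iff, singleton_inj] using hef
  · obtain ⟨-, hS, hconn⟩ := mem_filter.1 hS
    have hcompl : #Sᶜ = 1 := by rw [card_compl, ← nE]; lia
    obtain ⟨e, he⟩ := card_eq_one.1 hcompl
    obtain rfl : univ \ {e} = S := by rw [← he, ← compl_eq_univ_sdiff, compl_compl]
    exact ⟨e, mem_filter.2 ⟨mem_univ e, not_not.2 hconn⟩, rfl⟩

theorem one_le_nV_of_nE_eq (hE : G.nE = G.nV + 1) : 1 ≤ G.nV := by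
  obtain ⟨e⟩ : Nonempty G.E := Fintype.card_pos_iff.1 (by rw [← nE]; lia)
  exact Fintype.card_pos_iff.2 ⟨G.src e⟩

theorem rel_eq_of_nE_eq (hc : G.Connected) (hE : G.nE = G.nV + 1) (p : ℝ) :
    G.rel p = p ^ G.nE + #{e | ¬ G.IsBridge e} * p ^ (G.nE - 1) * (1 - p) +
      G.treeCount * p ^ (G.nE - 2) * (1 - p) ^ 2 := by
  obtain ⟨k, hk⟩ := Nat.exists_eq_add_of_le' (one_le_nV_of_nE_eq hE)
  have hsmall : ∑ j ∈ range k,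
      (#{S | #S = j ∧ G.ConnOn S} : ℝ) * (p ^ j * (1 - p) ^ (k + 2 - j)) = 0 := by
    refine sum_eq_zero fun j hj => ?_
    rw [filter_eq_empty_iff.2 fun S _ hS => ?_, card_empty, Nat.cast_zero, zero_mul]
    have := hS.2.nV_le
    grind
  have htree : G.treeCount = #{S | #S = k ∧ G.ConnOn S} := by simp [treeCount, hk]
  have hone : #{e | ¬ G.IsBridge e} = #{S | #S = k + 1 ∧ G.ConnOn S} := by
    simp [← card_connOn_eq_card_not_isBridge, hE, hk]
  have hall : #{S | #S = k + 2 ∧ G.ConnOn S} = 1 := by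
    refine card_eq_one.2 ⟨univ, ext fun S => ?_⟩
    have hS : #S = k + 2 ↔ S = univ := by rw [← card_eq_iff_eq_univ, ← nE, hE, hk]
    simp only [mem_filter, mem_univ, true_and, mem_singleton, hS, and_iff_left_iff_imp]
    rintro rfl
    exact hc
  have hE' : G.nE = k + 2 := by rw [hE, hk]
  rw [rel_eq_sum_card, hE', sum_range_succ, sum_range_succ, sum_range_succ, hsmall, ← htree,
    ← hone, hall]
  simp only [add_tsub_cancel_left, zero_add, Nat.reduceSubDiff, pow_one, Nat.cast_one, tsub_self,
    pow_zero, mul_one, one_mul, Nat.add_one_sub_one, add_tsub_cancel_right]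
  ring

end Multigraph

/-! ### Isomorphisms -/

section Isomorphism

variable {G H : Multigraph}

theorem MGIso.connOn_map_iff (I : MGIso G H) {S : Finset G.E} :
    H.ConnOn (S.map I.eMap.toEmbedding) ↔ G.ConnOn S := by
  have hends : ∀ (φ : H.V → Prop) (e : G.E), (φ (H.src (I.eMap e)) ↔ φ (H.tgt (I.eMap e))) ↔
      (φ (I.vMap (G.src e)) ↔ φ (I.vMap (G.tgt e))) :=
    fun φ e => Multigraph.Joins.iff_iff (I.ends_eq e) φ
  simp only [Multigraph.connOn_iff_forall_iff, forall_mem_map, Equiv.coe_toEmbedding, hends]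
  rw [(I.vMap.arrowCongr (Equiv.refl Prop)).forall_congr_left]
  simp [I.vMap.forall_congr_left]

theorem MGIso.treeCount_eq (I : MGIso G H) : G.treeCount = H.treeCount := by
  have hV : G.nV = H.nV := Fintype.card_congr I.vMap
  refine card_equiv I.eMap.finsetCongr fun S => ?_
  simp [hV, I.connOn_map_iff]

-- Connectedness makes the vertex map surjective: every vertex lies on an edge, hence in its image.
theorem isIso_of_bijective {fV : G.V → H.V} {fE : G.E → H.E} (hH : H.Connected)
    (hV : G.nV = H.nV) (hfE : Function.Bijective fE)
    (hJ : ∀ e, H.Joins (fE e) (fV (G.src e)) (fV (G.tgt e))) : IsIso G H := by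
  have hsurj : Function.Surjective fV := by
    intro v
    obtain ⟨u⟩ : Nonempty G.V :=
      Fintype.card_pos_iff.1 ((Fintype.card_pos_iff.2 ⟨v⟩).trans_eq hV.symm)
    refine (Multigraph.connOn_iff_forall_iff.1 hH (· ∈ Set.range fV) (fun f _ => ?_) (fV u) v).1
      ⟨u, rfl⟩
    obtain ⟨e, rfl⟩ := hfE.surjective f
    exact ((hJ e).iff_iff _).2 (by simp)
  have hfV : Function.Bijective fV := (Fintype.bijective_iff_surjective_and_card fV).2 ⟨hsurj, hV⟩
  exact ⟨⟨.ofBijective fV hfV, .ofBijective fE hfE, hJ⟩⟩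

end Isomorphism

/-! ### Contraction -/

namespace Multigraph

variable {G : Multigraph} {e : G.E} {x y : G.V}

/-- The edges of the contraction `G.contract e`, as edges of `G`. -/
def contractEmb (G : Multigraph) (e : G.E) : (G.contract e).E ↪ G.E :=
  Function.Embedding.subtype _

theorem contractEmb_ne (f : (G.contract e).E) : G.contractEmb e f ≠ e :=
  f.2

theorem nE_contract : (G.contract e).nE + 1 = G.nE := by
  have : Nonempty G.E := ⟨e⟩
  have hcard : (G.contract e).nE = G.nE - 1 := Set.card_ne_eq e
  have : 0 < G.nE := Fintype.card_pos
  lia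

/-- The representatives of the vertices of `G.contract e` when `e` joins `x` and `y`: the vertex
obtained by identifying `x` and `y` is represented by `y`. -/
def contractRep (h : G.Joins e x y) : (G.contract e).V → G.V :=
  Quot.lift (fun z => if z = x then y else z) (by
    rintro u v ⟨rfl, rfl⟩
    rcases h with ⟨rfl, rfl⟩ | ⟨rfl, rfl⟩ <;> simp)

theorem contractRep_mk_self (h : G.Joins e x y) :
    contractRep h (Quot.mk (contractRel G e) x) = y :=
  if_pos rfl

theorem contractRep_mk_of_ne (h : G.Joins e x y) {z : G.V} (hz : z ≠ x) :
    contractRep h (Quot.mk (contractRel G e) z) = z :=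
  if_neg hz

theorem contractRep_ne (h : G.Joins e x y) (hxy : y ≠ x) (q : (G.contract e).V) :
    contractRep h q ≠ x := by
  obtain ⟨z, rfl⟩ := Quot.exists_rep q
  rcases eq_or_ne z x with rfl | hz
  · rwa [contractRep_mk_self]
  · rwa [contractRep_mk_of_ne h hz]

theorem Joins.mk_eq_mk (h : G.Joins e x y) :
    Quot.mk (contractRel G e) x = Quot.mk (contractRel G e) y := by
  rcases h with ⟨rfl, rfl⟩ | ⟨rfl, rfl⟩
  exacts [Quot.sound ⟨rfl, rfl⟩, (Quot.sound ⟨rfl, rfl⟩).symm]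

theorem mk_contractRep (h : G.Joins e x y) (q : (G.contract e).V) :
    Quot.mk (contractRel G e) (contractRep h q) = q := by
  obtain ⟨z, rfl⟩ := Quot.exists_rep q
  rcases eq_or_ne z x with rfl | hz
  · rw [contractRep_mk_self, h.mk_eq_mk]
  · rw [contractRep_mk_of_ne h hz]

theorem nV_contract (he : G.src e ≠ G.tgt e) : (G.contract e).nV + 1 = G.nV := by
  have hJ := joins_src_tgt e
  have : Nonempty G.V := ⟨G.src e⟩
  have hequiv : (G.contract e).V ≃ {z : G.V // z ≠ G.src e} :=
    { toFun q := ⟨contractRep hJ q, contractRep_ne hJ he.symm q⟩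
      invFun z := Quot.mk _ z.1
      left_inv q := mk_contractRep hJ q
      right_inv z := Subtype.ext (contractRep_mk_of_ne hJ z.2) }
  have hcard : (G.contract e).nV = G.nV - 1 :=
    (Fintype.card_congr hequiv).trans (Set.card_ne_eq (G.src e))
  have : 0 < G.nV := Fintype.card_pos
  lia

theorem connOn_contract_iff {S : Finset (G.contract e).E} :
    (G.contract e).ConnOn S ↔ G.ConnOn (insert e (S.map (G.contractEmb e))) := by
  simp only [connOn_iff_forall_iff, forall_mem_insert, forall_mem_map]
  constructor
  · rintro h φ ⟨hφe, hφ⟩ u v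
    have hlift : ∀ u v, contractRel G e u v → φ u = φ v := by
      rintro u v ⟨rfl, rfl⟩
      exact propext hφe
    exact h (Quot.lift φ hlift) hφ (Quot.mk _ u) (Quot.mk _ v)
  · intro h ψ hψ q r
    obtain ⟨⟨u, rfl⟩, v, rfl⟩ := And.intro (Quot.exists_rep q) (Quot.exists_rep r)
    exact h (fun z => ψ (Quot.mk _ z)) ⟨by rw [(joins_src_tgt e).mk_eq_mk], hψ⟩ u v

theorem insert_map_univ_sdiff (F : Finset (G.contract e).E) :
    insert e ((univ \ F).map (G.contractEmb e)) = univ \ F.map (G.contractEmb e) := by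
  ext f
  simp only [mem_insert, mem_map, mem_sdiff, mem_univ, true_and]
  by_cases hf : f = e
  · simp [hf, contractEmb_ne]
  · obtain ⟨f, rfl⟩ : ∃ f', G.contractEmb e f' = f := ⟨⟨f, hf⟩, rfl⟩
    simp [hf]

theorem Connected.contract (h : G.Connected) : (G.contract e).Connected := by
  rw [Connected, ← sdiff_empty (s := univ), connOn_contract_iff, insert_map_univ_sdiff, map_empty,
    sdiff_empty]
  exact h

theorem Bridgeless.contract (h : G.Bridgeless) : (G.contract e).Bridgeless := by
  intro f
  rw [IsBridge, Disconnects, connOn_contract_iff, insert_map_univ_sdiff, map_singleton]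
  exact h _

theorem treeCount_contract (he : G.src e ≠ G.tgt e) :
    (G.contract e).treeCount = #{S | (#S + 1 = G.nV ∧ G.ConnOn S) ∧ e ∈ S} := by
  have hnotMem : ∀ S : Finset (G.contract e).E, e ∉ S.map (G.contractEmb e) := by
    simp [contractEmb_ne]
  refine card_bij (fun S _ => insert e (S.map (G.contractEmb e))) (fun S hS => ?_)
    (fun S _ T _ hST => ?_) fun T hT => ?_
  · obtain ⟨-, hcard, hconn⟩ := mem_filter.1 hS
    simp [← connOn_contract_iff, hconn, hnotMem, ← nV_contract he, hcard]
  · rw [← map_inj (f := G.contractEmb e), ← erase_insert (hnotMem S), hST, erase_insert (hnotMem T)]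
  · obtain ⟨-, ⟨hcard, hconn⟩, heT⟩ := mem_filter.1 hT
    have hmap : (univ.filter fun f => G.contractEmb e f ∈ T).map (G.contractEmb e) = T.erase e := by
      ext f
      simp only [mem_map, mem_filter, mem_univ, true_and, mem_erase]
      exact ⟨by rintro ⟨f, hf, rfl⟩; exact ⟨contractEmb_ne f, hf⟩,
        fun ⟨hfe, hf⟩ => ⟨⟨f, hfe⟩, hf, rfl⟩⟩
    have hins := congrArg (insert e) hmap
    rw [insert_erase heT] at hins
    refine ⟨_, mem_filter.2 ⟨mem_univ _, ?_, ?_⟩, hins⟩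
    · have := card_erase_add_one heT
      rw [← hmap, card_map] at this
      have := nV_contract he
      lia
    · rwa [connOn_contract_iff, hins]

theorem treeCount_contract_of_isBridge (hc : G.Connected) (he : G.IsBridge e) :
    (G.contract e).treeCount = G.treeCount := by
  rw [treeCount_contract (he.src_ne_tgt hc), ← filter_filter, treeCount,
    filter_true_of_mem fun S hS => ?_]
  by_contra heS
  exact he ((mem_filter.1 hS).2.2.mono (by simpa [subset_sdiff] using heS))

end Multigraph

/-! ### Subdivisions -/

theorem card_injOn_pairs_add_sum_choose {α ι : Type*} [Fintype α] [Fintype ι] (f : α → ι) :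
    #{F : Finset α | #F = 2 ∧ Set.InjOn f F} + ∑ i, (#{x | f x = i}).choose 2 =
      (Fintype.card α).choose 2 := by
  have hdisj : Set.PairwiseDisjoint (univ : Finset ι)
      fun i => powersetCard 2 ({x | f x = i} : Finset α) := by
    refine fun i _ j _ hij => disjoint_left.2 fun F hFi hFj => hij ?_
    rw [mem_powersetCard] at hFi hFj
    obtain ⟨x, hx⟩ := card_pos.1 (hFi.2.trans_gt two_pos)
    exact (mem_filter.1 (hFi.1 hx)).2.symm.trans (mem_filter.1 (hFj.1 hx)).2
  have hfiber : univ.biUnion (fun i => powersetCard 2 ({x | f x = i} : Finset α)) =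
      ({F | #F = 2 ∧ ¬ Set.InjOn f F} : Finset (Finset α)) := by
    ext F
    simp only [mem_biUnion, mem_univ, true_and, mem_powersetCard, mem_filter]
    rw [exists_and_right, and_comm]
    refine and_congr_right fun hF => ?_
    obtain ⟨a, b, hab, rfl⟩ := card_eq_two.1 hF
    simp [insert_subset_iff, Set.InjOn, hab, hab.symm, eq_comm]
  simp only [← card_powersetCard 2 {x | f x = _}]
  rw [← card_biUnion hdisj, hfiber, ← filter_filter, ← filter_filter,
    card_filter_add_card_filter_not, ← card_univ, ← card_powersetCard]
  congr 1
  ext F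
  simp

theorem iff_of_forall_iff_succ {φ : ℕ → Prop} {a b : ℕ} (hab : a ≤ b)
    (h : ∀ k, a ≤ k → k < b → (φ k ↔ φ (k + 1))) : φ a ↔ φ b := by
  induction b, hab using Nat.le_induction with
  | base => rfl
  | succ b hb ih => exact (ih fun k hak hkb => h k hak (by lia)).trans (h b hb (by lia))

section Subdivision

variable {D : Multigraph} {w : D.E → ℕ}

theorem chainNode_zero (e : D.E) : chainNode D w e 0 = .inl (Quot.mk _ (D.src e)) := by
  simp [chainNode]

theorem chainNode_succ_of_lt {e : D.E} {k : ℕ} (hk : k + 1 < w e) :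
    chainNode D w e (k + 1) = .inr ⟨e, ⟨k, by lia⟩⟩ := by
  simp [chainNode, hk]

theorem chainNode_self (e : D.E) : chainNode D w e (w e) = .inl (Quot.mk _ (D.tgt e)) := by
  rcases Nat.eq_zero_or_pos (w e) with he | he
  · rw [he, chainNode_zero, Quot.sound ⟨e, he, rfl, rfl⟩]
  · simp [chainNode, he.ne']

theorem chainNode_eq_iff {e f : D.E} {j k : ℕ} (hk : 0 < k) (hke : k < w e) :
    chainNode D w f j = chainNode D w e k ↔ f = e ∧ j = k := by
  refine ⟨fun h => ?_, by rintro ⟨rfl, rfl⟩; rfl⟩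
  rw [chainNode, chainNode, dif_pos (c := 0 < k ∧ k < w e) ⟨hk, hke⟩] at h
  split_ifs at h with hj
  obtain ⟨rfl, h⟩ := Sigma.mk.inj_iff.1 (Sum.inr_injective h)
  have := Fin.mk.inj (eq_of_heq h)
  exact ⟨rfl, by lia⟩

theorem exists_eq_chainNode (x : (subdivide D w).V) :
    (∃ u : D.V, x = .inl (Quot.mk _ u)) ∨ ∃ e, ∃ k ≤ w e, x = chainNode D w e k := by
  obtain ⟨⟨u⟩⟩ | ⟨e, k, hk⟩ := x
  · exact .inl ⟨u, rfl⟩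
  · exact .inr ⟨e, k + 1, by lia, (chainNode_succ_of_lt (by lia)).symm⟩

/-- The edge of `D` whose chain contains the edge `f` of `subdivide D w`. -/
def chainOf (f : (subdivide D w).E) : D.E :=
  f.1

theorem card_chainOf_eq (e : D.E) : #{f : (subdivide D w).E | chainOf f = e} = w e := by
  refine (card_bij (fun k _ => (⟨e, k⟩ : (subdivide D w).E)) (s := (univ : Finset (Fin (w e))))
    (fun k _ => mem_filter.2 ⟨mem_univ _, rfl⟩)
    (fun k _ l _ h => eq_of_heq (Sigma.mk.inj h).2) ?_).symm.trans (by simp)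
  rintro ⟨f, k⟩ hf
  obtain rfl : f = e := (mem_filter.1 hf).2
  exact ⟨k, mem_univ k, rfl⟩

theorem card_injOn_chainOf_add_sum_choose :
    #{F : Finset (subdivide D w).E | #F = 2 ∧ Set.InjOn chainOf (F : Set (subdivide D w).E)} +
      ∑ e, (w e).choose 2 = (subdivide D w).nE.choose 2 := by
  simpa only [card_chainOf_eq, Multigraph.nE] using
    card_injOn_pairs_add_sum_choose (chainOf : (subdivide D w).E → D.E)

theorem nE_subdivide : (subdivide D w).nE = ∑ e, w e :=
  (Fintype.card_sigma (α := fun e => Fin (w e))).trans (by simp)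

theorem nV_subdivide (hw : ZeroAcyclic D w) :
    (subdivide D w).nV + D.nE = D.nV + (subdivide D w).nE := by
  have hnV : (subdivide D w).nV = Fintype.card (Quot (zeroRel D w)) + ∑ e, (w e - 1) :=
    Fintype.card_sum.trans (by simp)
  have hpred : ∑ e, (w e - 1) + D.nE = ∑ e, w e + #{e | w e = 0} := by
    rw [Multigraph.nE, ← card_univ, card_eq_sum_ones, ← sum_add_distrib, card_filter,
      ← sum_add_distrib]
    exact sum_congr rfl fun e _ => by split_ifs <;> lia
  rw [ZeroAcyclic, ← Multigraph.nV] at hw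
  rw [nE_subdivide]
  lia

/- A node of a chain with a single missing edge is still connected to one end of the chain, and
the complete chains connect the vertices of `D`. -/
theorem connOn_subdivide {F : Finset (subdivide D w).E}
    (hF : Set.InjOn chainOf (F : Set (subdivide D w).E))
    (hD : D.ConnOn (univ \ F.image chainOf)) : (subdivide D w).ConnOn (univ \ F) := by
  rw [Multigraph.connOn_iff_forall_iff] at hD ⊢
  intro φ hφ
  have hstep (e : D.E) (k : ℕ) (hk : k < w e) (hkF : (⟨e, k, hk⟩ : (subdivide D w).E) ∉ F) :
      φ (chainNode D w e k) ↔ φ (chainNode D w e (k + 1)) :=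
    hφ ⟨e, k, hk⟩ (mem_sdiff.2 ⟨mem_univ _, hkF⟩)
  have hends (u v : D.V) : φ (.inl (Quot.mk _ u)) ↔ φ (.inl (Quot.mk _ v)) := by
    refine hD (fun u => φ (.inl (Quot.mk _ u))) (fun e he => ?_) u v
    rw [← chainNode_zero, ← chainNode_self]
    exact iff_of_forall_iff_succ (φ := fun k => φ (chainNode D w e k)) (Nat.zero_le _)
      fun k _ hk => hstep e k hk fun hkF => (mem_sdiff.1 he).2 (mem_image_of_mem _ hkF)
  have hnode (e : D.E) (k : ℕ) (hk : k ≤ w e) (v : D.V) :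
      φ (chainNode D w e k) ↔ φ (.inl (Quot.mk _ v)) := by
    by_cases hmiss : ∃ i, ∃ hi : i < w e, i < k ∧ (⟨e, i, hi⟩ : (subdivide D w).E) ∈ F
    · obtain ⟨i, hi, hik, hiF⟩ := hmiss
      rw [← hends (D.tgt e), ← chainNode_self]
      refine iff_of_forall_iff_succ (φ := fun k => φ (chainNode D w e k)) hk
        fun j hkj hj => hstep e j hj fun hjF => ?_
      have := congrArg (fun f => (f.2 : ℕ)) (hF hiF hjF rfl)
      grind
    · push Not at hmiss
      rw [← hends (D.src e), ← chainNode_zero]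
      exact (iff_of_forall_iff_succ (φ := fun k => φ (chainNode D w e k)) (Nat.zero_le k)
        fun j _ hjk => hstep e j (by lia) (hmiss j (by lia) hjk)).symm
  have hall (x : (subdivide D w).V) (v : D.V) : φ x ↔ φ (.inl (Quot.mk _ v)) := by
    obtain ⟨u, rfl⟩ | ⟨e, k, hk, rfl⟩ := exists_eq_chainNode x
    exacts [hends u v, hnode e k hk v]
  intro x y
  obtain ⟨v⟩ : Nonempty D.V := by
    obtain ⟨u, -⟩ | ⟨e, -⟩ := exists_eq_chainNode x
    exacts [⟨u⟩, ⟨D.src e⟩]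
  exact (hall x v).trans (hall y v).symm

-- Two missing edges of one chain isolate the nodes between them.
theorem injOn_chainOf_of_connOn {F : Finset (subdivide D w).E}
    (hF : (subdivide D w).ConnOn (univ \ F)) : Set.InjOn chainOf (F : Set (subdivide D w).E) := by
  suffices hlt : ∀ (e : D.E) (a b : Fin (w e)), ⟨e, a⟩ ∈ F → ⟨e, b⟩ ∈ F → ¬ a < b by
    rintro ⟨e, a⟩ ha ⟨f, b⟩ hb (rfl : e = f)
    rw [le_antisymm (not_lt.1 (hlt e b a hb ha)) (not_lt.1 (hlt e a b ha hb))]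
  intro e a b ha hb hab
  let isolated (x : (subdivide D w).V) : Prop := ∃ k, a.1 < k ∧ k ≤ b.1 ∧ x = chainNode D w e k
  have hisolated (f : D.E) (j : ℕ) :
      isolated (chainNode D w f j) ↔ f = e ∧ a.1 < j ∧ j ≤ b.1 := by
    constructor
    · rintro ⟨k, hak, hkb, h⟩
      obtain ⟨rfl, rfl⟩ := (chainNode_eq_iff (by lia) (by lia)).1 h
      exact ⟨rfl, hak, hkb⟩
    · rintro ⟨rfl, haj, hjb⟩
      exact ⟨j, haj, hjb, rfl⟩
  have hclosed : ∀ f ∈ univ \ F,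
      (isolated ((subdivide D w).src f) ↔ isolated ((subdivide D w).tgt f)) := by
    rintro ⟨f, j⟩ hf
    refine (hisolated f j).trans (Iff.trans ?_ (hisolated f (j + 1)).symm)
    refine and_congr_right ?_
    rintro rfl
    have hja : j.1 ≠ a.1 := fun h => (mem_sdiff.1 hf).2 (Fin.ext h ▸ ha)
    have hjb : j.1 ≠ b.1 := fun h => (mem_sdiff.1 hf).2 (Fin.ext h ▸ hb)
    lia
  have hconst := Multigraph.connOn_iff_forall_iff.1 hF isolated hclosed
    (chainNode D w e 0) (chainNode D w e b)
  rw [hisolated, hisolated] at hconst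
  grind

end Subdivision

/-! ### θ-graphs -/

theorem sum_mul_add_sum_choose_two (w : Fin 3 → ℕ) :
    w 0 * w 1 + w 0 * w 2 + w 1 * w 2 + ∑ i, (w i).choose 2 = (∑ i, w i).choose 2 := by
  have hQ : (w 0 * w 1 + w 0 * w 2 + w 1 * w 2 + ∑ i, ((w i).choose 2 : ℚ) : ℚ) =
      ((∑ i, w i).choose 2 : ℕ) := by
    simp only [Nat.cast_choose_two, Fin.sum_univ_three, Nat.cast_add]
    ring
  exact_mod_cast hQ

section Theta

/-- The θ-graph with the three chain lengths `w 0`, `w 1` and `w 2`. -/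
abbrev theta (w : Fin 3 → ℕ) : Multigraph :=
  subdivide dipole3 w

variable {w : Fin 3 → ℕ}

theorem connOn_dipole3 {S : Finset dipole3.E} (hS : S.Nonempty) : dipole3.ConnOn S := by
  rw [Multigraph.connOn_iff_forall_iff]
  intro φ hφ
  obtain ⟨i, hi⟩ := hS
  have h01 : φ (0 : Fin 2) ↔ φ (1 : Fin 2) := hφ i hi
  exact Fin.forall_fin_two.2 ⟨Fin.forall_fin_two.2 ⟨Iff.rfl, h01⟩,
    Fin.forall_fin_two.2 ⟨h01.symm, Iff.rfl⟩⟩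

theorem zeroAcyclic_dipole3 {w : dipole3.E → ℕ} (hw : {i | w i = 0}.Subsingleton) :
    ZeroAcyclic dipole3 w := by
  rw [ZeroAcyclic]
  by_cases hzero : ∃ i, w i = 0
  · obtain ⟨i, hi⟩ := hzero
    have hfilter : univ.filter (fun e : dipole3.E => w e = 0) = {i} :=
      eq_singleton_iff_unique_mem.2 ⟨by simpa using hi, fun j hj => hw (by simpa using hj) hi⟩
    have hmk : Quot.mk (zeroRel dipole3 w) (0 : Fin 2) = Quot.mk _ (1 : Fin 2) :=
      Quot.sound ⟨i, hi, rfl, rfl⟩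
    have hquot : Fintype.card (Quot (zeroRel dipole3 w)) = 1 :=
      Fintype.card_eq_one_iff.2 ⟨Quot.mk _ (1 : Fin 2),
        Quot.ind (Fin.forall_fin_two.2 ⟨hmk, rfl⟩)⟩
    rw [hfilter, hquot, card_singleton]
    rfl
  · push Not at hzero
    have hinj : Function.Injective (Quot.mk (zeroRel dipole3 w)) := fun u v huv =>
      congrArg (Quot.lift id fun _ _ ⟨i, hi, _⟩ => absurd hi (hzero i)) huv
    rw [filter_false_of_mem fun i _ => hzero i, card_empty, add_zero]
    exact (Fintype.card_of_bijective ⟨hinj, Quot.mk_surjective⟩).symm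

theorem nE_theta : (theta w).nE = w 0 + w 1 + w 2 :=
  nE_subdivide.trans (Fin.sum_univ_three w)

theorem nE_theta_eq_nV_add_one (hw : {i | w i = 0}.Subsingleton) :
    (theta w).nE = (theta w).nV + 1 := by
  have : (theta w).nV + 3 = 2 + (theta w).nE := nV_subdivide (zeroAcyclic_dipole3 hw)
  lia

theorem connOn_theta_iff {F : Finset (theta w).E} (hF : #F ≤ 2) :
    (theta w).ConnOn (univ \ F) ↔ Set.InjOn chainOf (F : Set (theta w).E) := by
  refine ⟨injOn_chainOf_of_connOn, fun hinj => connOn_subdivide hinj (connOn_dipole3 ?_)⟩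
  have hcard : #(F.image chainOf) < #(univ : Finset dipole3.E) :=
    (card_image_le.trans hF).trans_lt (by decide : 2 < Fintype.card (Fin 3))
  rw [sdiff_nonempty]
  exact fun h => hcard.not_ge (card_le_card h)

theorem connected_theta : (theta w).Connected := by
  have := (connOn_theta_iff (w := w) (F := ∅) (by simp)).2 (by simp)
  rwa [sdiff_empty] at this

theorem bridgeless_theta : (theta w).Bridgeless := fun e =>
  not_not.2 ((connOn_theta_iff (by simp)).2 (by simp))

theorem treeCount_theta_add (hw : {i | w i = 0}.Subsingleton) :
    (theta w).treeCount + ∑ i, (w i).choose 2 = (theta w).nE.choose 2 := by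
  have htree : (theta w).treeCount =
      #{F : Finset (theta w).E | #F = 2 ∧ Set.InjOn chainOf (F : Set (theta w).E)} := by
    refine card_equiv ⟨compl, compl, compl_compl, compl_compl⟩ fun S => ?_
    have hcard : #S + 1 = (theta w).nV ↔ #Sᶜ = 2 := by
      have : #Sᶜ + #S = (theta w).nE := card_compl_add_card S
      have := nE_theta_eq_nV_add_one hw
      lia
    simp only [mem_filter, mem_univ, true_and, Equiv.coe_fn_mk, hcard]
    refine and_congr_right fun hS => ?_
    rw [← connOn_theta_iff hS.le, ← compl_eq_univ_sdiff, compl_compl]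
  exact htree ▸ card_injOn_chainOf_add_sum_choose

theorem treeCount_theta (hw : {i | w i = 0}.Subsingleton) :
    (theta w).treeCount = w 0 * w 1 + w 0 * w 2 + w 1 * w 2 := by
  have htree := treeCount_theta_add hw
  have hsum := sum_mul_add_sum_choose_two w
  rw [nE_theta, ← Fin.sum_univ_three] at htree
  lia

end Theta

/-! ### Balanced weights -/

theorem two_mul_choose_two_add_choose_two (a q : ℕ) :
    (2 * (a.choose 2 + (q + 1).choose 2) : ℤ) = 2 * (q * a) + (a - q) * (a - q - 1) := by
  have hQ : (2 * (a.choose 2 + (q + 1).choose 2) : ℚ) = 2 * (q * a) + (a - q) * (a - q - 1) := by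
    simp only [Nat.cast_choose_two, Nat.cast_add, Nat.cast_one]
    ring
  exact_mod_cast hQ

theorem mul_le_choose_two_add_choose_two (a q : ℕ) :
    q * a ≤ a.choose 2 + (q + 1).choose 2 := by
  have hconsecutive : (0 : ℤ) ≤ (a - q) * (a - q - 1) := by
    rcases le_or_gt (a : ℤ) q with h | h
    · exact mul_nonneg_of_nonpos_of_nonpos (by lia) (by lia)
    · exact mul_nonneg (by lia) (by lia)
  have := two_mul_choose_two_add_choose_two a q
  lia

theorem mul_eq_choose_two_add_choose_two_iff {a q : ℕ} :
    q * a = a.choose 2 + (q + 1).choose 2 ↔ a = q ∨ a = q + 1 := by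
  have h := two_mul_choose_two_add_choose_two a q
  have hzero : ((a - q) * (a - q - 1) : ℤ) = 0 ↔ a = q ∨ a = q + 1 := by
    rw [mul_eq_zero]
    lia
  rw [← hzero]
  zify
  constructor <;> intro <;> linarith

section Balanced

variable {ι : Type} [Fintype ι] {v w : ι → ℕ}

theorem balancedWeights_iff_eq_div : BalancedWeights w ↔
    ∀ i, w i = (∑ j, w j) / Fintype.card ι ∨ w i = (∑ j, w j) / Fintype.card ι + 1 := by
  simpa [Set.EquitableOn, BalancedWeights] using equitableOn_iff (s := univ) (f := w)

theorem BalancedWeights.sum_choose_two_le (hv : BalancedWeights v) (h : ∑ i, v i = ∑ i, w i) :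
    ∑ i, (v i).choose 2 ≤ ∑ i, (w i).choose 2 := by
  set q := (∑ i, v i) / Fintype.card ι
  refine le_of_add_le_add_right (a := ∑ _ : ι, (q + 1).choose 2) ?_
  calc ∑ i, (v i).choose 2 + ∑ _ : ι, (q + 1).choose 2
    _ = ∑ i, q * v i := by
      rw [← sum_add_distrib]
      exact sum_congr rfl fun i _ =>
        (mul_eq_choose_two_add_choose_two_iff.2 (balancedWeights_iff_eq_div.1 hv i)).symm
    _ = ∑ i, q * w i := by rw [← mul_sum, ← mul_sum, h]
    _ ≤ ∑ i, (w i).choose 2 + ∑ _ : ι, (q + 1).choose 2 := by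
      rw [← sum_add_distrib]
      exact sum_le_sum fun i _ => mul_le_choose_two_add_choose_two (w i) q

theorem BalancedWeights.sum_choose_two_eq_iff (hv : BalancedWeights v)
    (h : ∑ i, v i = ∑ i, w i) :
    ∑ i, (v i).choose 2 = ∑ i, (w i).choose 2 ↔ BalancedWeights w := by
  refine ⟨fun heq => ?_, fun hw =>
    (hv.sum_choose_two_le h).antisymm (hw.sum_choose_two_le h.symm)⟩
  set q := (∑ i, w i) / Fintype.card ι
  have hv' (i : ι) := mul_eq_choose_two_add_choose_two_iff.2 (h ▸ balancedWeights_iff_eq_div.1 hv i)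
  have hsum : ∑ i, q * w i = ∑ i, ((w i).choose 2 + (q + 1).choose 2) := by
    rw [sum_add_distrib, ← heq, ← sum_add_distrib, ← mul_sum, ← h, mul_sum]
    exact sum_congr rfl fun i _ => hv' i
  rw [sum_eq_sum_iff_of_le fun i _ => mul_le_choose_two_add_choose_two (w i) q] at hsum
  exact balancedWeights_iff_eq_div.2 fun i =>
    mul_eq_choose_two_add_choose_two_iff.1 (hsum i (mem_univ i))

theorem BalancedWeights.exists_perm_eq_comp (hv : BalancedWeights v) (hw : BalancedWeights w)
    (h : ∑ i, v i = ∑ i, w i) : ∃ σ : Equiv.Perm ι, v = w ∘ σ := by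
  rw [balancedWeights_iff_eq_div] at hv hw
  rw [h] at hv
  set q := (∑ i, w i) / Fintype.card ι
  have hsum {u : ι → ℕ} (hu : ∀ i, u i = q ∨ u i = q + 1) :
      ∑ i, u i = ∑ _ : ι, q + Fintype.card {i // u i = q + 1} := by
    rw [Fintype.card_subtype, card_filter, ← sum_add_distrib]
    exact sum_congr rfl fun i _ => by grind
  have hcard : Fintype.card {i // v i = q + 1} = Fintype.card {i // w i = q + 1} := by
    have := hsum hv
    have := hsum hw
    lia
  set τ := Fintype.equivOfCardEq hcard
  refine ⟨τ.extendSubtype, funext fun i => ?_⟩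
  have hmem := τ.extendSubtype_mem i
  have hnotMem := τ.extendSubtype_not_mem i
  grind

end Balanced

theorem BalancedWeights.sum_mul_le {v w : Fin 3 → ℕ} (hv : BalancedWeights v)
    (h : ∑ i, v i = ∑ i, w i) :
    w 0 * w 1 + w 0 * w 2 + w 1 * w 2 ≤ v 0 * v 1 + v 0 * v 2 + v 1 * v 2 := by
  have hchoose := hv.sum_choose_two_le h
  have hidv := sum_mul_add_sum_choose_two v
  have hidw := sum_mul_add_sum_choose_two w
  rw [h] at hidv
  lia

theorem BalancedWeights.sum_mul_eq_iff {v w : Fin 3 → ℕ} (hv : BalancedWeights v)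
    (h : ∑ i, v i = ∑ i, w i) :
    w 0 * w 1 + w 0 * w 2 + w 1 * w 2 = v 0 * v 1 + v 0 * v 2 + v 1 * v 2 ↔
      BalancedWeights w := by
  rw [← hv.sum_choose_two_eq_iff h]
  have hidv := sum_mul_add_sum_choose_two v
  have hidw := sum_mul_add_sum_choose_two w
  rw [h] at hidv
  lia

theorem exists_balancedWeights (m : ℕ) :
    ∃ w : Fin 3 → ℕ, w 0 + w 1 + w 2 = m ∧ BalancedWeights w :=
  ⟨fun i => (m + i) / 3, by simp only [Fin.val_zero, Fin.val_one, Fin.val_two]; lia,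
    fun i j => by have := i.2; lia⟩

theorem BalancedWeights.subsingleton_eq_zero {w : Fin 3 → ℕ} (hw : BalancedWeights w)
    (hsum : 2 ≤ w 0 + w 1 + w 2) : {i | w i = 0}.Subsingleton := by
  have h01 := hw 0 1
  have h10 := hw 1 0
  have h20 := hw 2 0
  intro i (hi : w i = 0) j (hj : w j = 0)
  fin_cases i <;> fin_cases j <;> simp_all <;> lia

/-! ### Chain decompositions -/

namespace Multigraph

variable {G : Multigraph}

/-- `G.IsWalk l x y`: the edges listed in `l` form a walk from `x` to `y`. -/
inductive IsWalk (G : Multigraph) : List G.E → G.V → G.V → Prop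
  | nil (x : G.V) : IsWalk G [] x x
  | cons {e : G.E} {l : List G.E} {x y z : G.V} :
      G.Joins e x y → IsWalk G l y z → IsWalk G (e :: l) x z

theorem Joins.isWalk {e : G.E} {x y : G.V} (h : G.Joins e x y) : G.IsWalk [e] x y :=
  .cons h (.nil y)

theorem IsWalk.append {l l' : List G.E} {x y z : G.V} (h : G.IsWalk l x y)
    (h' : G.IsWalk l' y z) : G.IsWalk (l ++ l') x z := by
  induction h with
  | nil => exact h'
  | cons he _ ih => exact .cons he (ih h')

theorem IsWalk.exists_nodes {l : List G.E} {x y : G.V} (h : G.IsWalk l x y) :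
    ∃ node : ℕ → G.V, node 0 = x ∧ node l.length = y ∧
      ∀ (k : ℕ) (hk : k < l.length), G.Joins l[k] (node k) (node (k + 1)) := by
  induction h with
  | nil x => exact ⟨fun _ => x, rfl, rfl, fun k hk => absurd hk (Nat.not_lt_zero k)⟩
  | @cons e l x y z he _ ih =>
    obtain ⟨node, rfl, rfl, hnode⟩ := ih
    refine ⟨fun k => k.casesOn x node, rfl, rfl, fun k hk => ?_⟩
    cases k with
    | zero => exact he
    | succ k => exact hnode k (Nat.lt_of_succ_lt_succ hk)

end Multigraph

/-- A decomposition of the edges of `H` into walks, one for each edge of `D`, whose endpoints are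
prescribed by a map from the vertices of `D` to those of `H`. -/
structure ChainDecomposition (D H : Multigraph) where
  vtx : D.V → H.V
  chain : D.E → List H.E
  isWalk : ∀ e, H.IsWalk (chain e) (vtx (D.src e)) (vtx (D.tgt e))
  sum_chain : ∑ e, (chain e : Multiset H.E) = univ.val

namespace ChainDecomposition

variable {D H : Multigraph}

/-- The lengths of the chains of a decomposition. -/
def weight (C : ChainDecomposition D H) (e : D.E) : ℕ :=
  (C.chain e).length

theorem sum_weight (C : ChainDecomposition D H) : ∑ e, C.weight e = H.nE := by
  calc ∑ e, C.weight e = Multiset.card (∑ e, (C.chain e : Multiset H.E)) := by simp [weight]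
    _ = H.nE := by rw [C.sum_chain]; rfl

theorem exists_mem_chain (C : ChainDecomposition D H) (f : H.E) : ∃ e, f ∈ C.chain e := by
  have hf : f ∈ ∑ e, (C.chain e : Multiset H.E) := C.sum_chain ▸ mem_univ_val f
  simpa [Multiset.mem_sum] using hf

theorem isIso (C : ChainDecomposition D H) (hH : H.Connected) (hw : ZeroAcyclic D C.weight)
    (hE : D.nE + H.nV = D.nV + H.nE) : IsIso (subdivide D C.weight) H := by
  choose node hzero hlength hnode using fun e => (C.isWalk e).exists_nodes
  have hlift : ∀ u v, zeroRel D C.weight u v → C.vtx u = C.vtx v := by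
    rintro u v ⟨e, he, rfl, rfl⟩
    rw [← hzero, ← hlength, ← weight, he]
  let fV : (subdivide D C.weight).V → H.V :=
    Sum.elim (Quot.lift C.vtx hlift) fun ⟨e, k⟩ => node e (k + 1)
  have hfV (e : D.E) (k : ℕ) (hk : k ≤ C.weight e) : fV (chainNode D C.weight e k) = node e k := by
    rcases hk.eq_or_lt with rfl | hk
    · rw [chainNode_self]
      exact (hlength e).symm
    cases k with
    | zero =>
      rw [chainNode_zero]
      exact (hzero e).symm
    | succ k => rw [chainNode_succ_of_lt hk]; rfl
  have hnE : (subdivide D C.weight).nE = H.nE := nE_subdivide.trans C.sum_weight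
  let fE : (subdivide D C.weight).E → H.E := fun ⟨e, k⟩ => (C.chain e).get k
  have hfE : Function.Bijective fE := by
    refine (Fintype.bijective_iff_surjective_and_card fE).2 ⟨fun f => ?_, hnE⟩
    obtain ⟨e, he⟩ := C.exists_mem_chain f
    obtain ⟨k, rfl⟩ := List.get_of_mem he
    exact ⟨⟨e, k⟩, rfl⟩
  have hnV : (subdivide D C.weight).nV = H.nV := by
    have := nV_subdivide hw
    lia
  refine isIso_of_bijective (fV := fV) hH hnV hfE fun ⟨e, k⟩ => ?_
  have hsrc : fV ((subdivide D C.weight).src ⟨e, k⟩) = node e k := hfV e k k.2.le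
  have htgt : fV ((subdivide D C.weight).tgt ⟨e, k⟩) = node e (k + 1) := hfV e (k + 1) k.2
  rw [hsrc, htgt]
  exact hnode e k k.2

end ChainDecomposition

namespace Multigraph

variable {G : Multigraph} {e f : G.E} {x y z : G.V}

theorem Joins.eq_and_eq_or {a b : G.V} (h : G.Joins e x y) (h' : G.Joins e a b) :
    (a = x ∧ b = y) ∨ (a = y ∧ b = x) := by
  unfold Joins at h h'
  grind

theorem Joins.exists_of_contract {g : (G.contract e).E} {q r : (G.contract e).V}
    (h : (G.contract e).Joins g q r) : ∃ a b, G.Joins (G.contractEmb e g) a b ∧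
      Quot.mk (contractRel G e) a = q ∧ Quot.mk (contractRel G e) b = r := by
  rcases h with ⟨rfl, rfl⟩ | ⟨rfl, rfl⟩
  exacts [⟨_, _, joins_src_tgt _, rfl, rfl⟩, ⟨_, _, (joins_src_tgt _).symm, rfl, rfl⟩]

theorem exists_isWalk_of_joins_contract (he : G.Joins e x y) (hf : G.Joins f x z) (hzx : z ≠ x)
    (hx : ∀ g, g ≠ e → g ≠ f → G.src g ≠ x ∧ G.tgt g ≠ x) {g : (G.contract e).E}
    {q r : (G.contract e).V} (h : (G.contract e).Joins g q r) :
    ∃ l, G.IsWalk l (contractRep he q) (contractRep he r) ∧ (l : Multiset G.E) =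
      {G.contractEmb e g} + (if G.contractEmb e g = f then 1 else 0) • {e} := by
  obtain ⟨a, b, hab, rfl, rfl⟩ := h.exists_of_contract
  by_cases hgf : G.contractEmb e g = f
  · rw [hgf] at hab ⊢
    obtain ⟨rfl, rfl⟩ | ⟨rfl, rfl⟩ := hf.eq_and_eq_or hab
    · rw [contractRep_mk_self, contractRep_mk_of_ne he hzx]
      refine ⟨[e, f], .cons he.symm hf.isWalk, ?_⟩
      rw [if_pos rfl, one_smul]
      exact Multiset.coe_eq_coe.2 (.swap f e [])
    · rw [contractRep_mk_self, contractRep_mk_of_ne he hzx]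
      exact ⟨[f, e], .cons hf.symm he.isWalk, by simp; rfl⟩
  · obtain ⟨hsrc, htgt⟩ := hx _ (contractEmb_ne g) hgf
    have hne : a ≠ x ∧ b ≠ x := by
      rcases hab with ⟨rfl, rfl⟩ | ⟨rfl, rfl⟩
      exacts [⟨hsrc, htgt⟩, ⟨htgt, hsrc⟩]
    rw [contractRep_mk_of_ne he hne.1, contractRep_mk_of_ne he hne.2]
    exact ⟨[G.contractEmb e g], hab.isWalk, by simp [hgf]⟩

-- A walk through the contracted vertex becomes a walk of `G` by inserting `e` next to each `f`.
theorem exists_isWalk_of_isWalk_contract (he : G.Joins e x y) (hf : G.Joins f x z) (hzx : z ≠ x)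
    (hx : ∀ g, g ≠ e → g ≠ f → G.src g ≠ x ∧ G.tgt g ≠ x) {l : List (G.contract e).E}
    {q r : (G.contract e).V} (h : (G.contract e).IsWalk l q r) :
    ∃ l', G.IsWalk l' (contractRep he q) (contractRep he r) ∧ (l' : Multiset G.E) =
      l.map (G.contractEmb e) + (l.map (G.contractEmb e)).count f • {e} := by
  induction h with
  | nil q => exact ⟨[], .nil _, by simp⟩
  | @cons g l _ _ _ hg _ ih =>
    obtain ⟨l₁, hl₁, h₁⟩ := exists_isWalk_of_joins_contract he hf hzx hx hg
    obtain ⟨l₂, hl₂, h₂⟩ := ih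
    refine ⟨l₁ ++ l₂, hl₁.append hl₂, ?_⟩
    simp only [← Multiset.coe_add, h₁, h₂, List.map_cons, List.count_cons, beq_iff_eq, add_smul,
      ← Multiset.cons_coe, ← Multiset.singleton_add]
    abel

end Multigraph

theorem ChainDecomposition.exists_of_contract {D G : Multigraph} {e f : G.E} {x y z : G.V}
    (C : ChainDecomposition D (G.contract e)) (he : G.Joins e x y) (hf : G.Joins f x z)
    (hfe : f ≠ e) (hzx : z ≠ x) (hx : ∀ g, g ≠ e → g ≠ f → G.src g ≠ x ∧ G.tgt g ≠ x) :
    ∃ C' : ChainDecomposition D G, ∀ i, C'.weight i = 0 → C.weight i = 0 := by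
  choose chain hwalk hchain using fun i =>
    Multigraph.exists_isWalk_of_isWalk_contract he hf hzx hx (C.isWalk i)
  have hmap : ∑ i, ((C.chain i).map (G.contractEmb e) : Multiset G.E) =
      (univ.map (G.contractEmb e)).val := by
    rw [map_val, ← C.sum_chain]
    exact (map_sum (Multiset.mapAddMonoidHom (G.contractEmb e))
      (fun i => (C.chain i : Multiset (G.contract e).E)) univ).symm
  have hcount : ∑ i, ((C.chain i).map (G.contractEmb e)).count f = 1 := by
    calc ∑ i, ((C.chain i).map (G.contractEmb e)).count f
      _ = (∑ i, ((C.chain i).map (G.contractEmb e) : Multiset G.E)).count f := by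
        simp [Multiset.count_sum']
      _ = 1 := by
        rw [hmap]
        exact Multiset.count_eq_one_of_mem (Finset.nodup _)
          (mem_map_of_mem (G.contractEmb e) (mem_univ ⟨f, hfe⟩))
  have hinsert : insert e (univ.map (G.contractEmb e)) = univ := by
    simpa using G.insert_map_univ_sdiff (e := e) ∅
  refine ⟨⟨fun u => Multigraph.contractRep he (C.vtx u), chain, hwalk, ?_⟩, fun i hi => ?_⟩
  · rw [sum_congr rfl fun i _ => hchain i, sum_add_distrib, ← sum_smul, hmap, hcount, one_smul,
      ← hinsert, insert_val_of_notMem (by simp [Multigraph.contractEmb_ne]), add_comm,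
      Multiset.singleton_add]
  · have hnil : chain i = [] := List.length_eq_zero_iff.1 hi
    have := hchain i
    rw [hnil] at this
    simpa [weight] using (add_eq_zero.1 this.symm).1

/-! ### Bridgeless graphs of exceedance one -/

section Dipole

variable {G : Multigraph}

/-- The decomposition with permuted chains. -/
def ChainDecomposition.perm (C : ChainDecomposition dipole3 G) (σ : Equiv.Perm dipole3.E) :
    ChainDecomposition dipole3 G where
  vtx := C.vtx
  chain := C.chain ∘ σ
  isWalk i := C.isWalk (σ i)
  sum_chain := (Equiv.sum_comp σ fun i => (C.chain i : Multiset G.E)).trans C.sum_chain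

namespace Multigraph

theorem exists_chainDecomposition_of_isWalk {x y : G.V} {a b c : List G.E} (ha : G.IsWalk a x y)
    (hb : G.IsWalk b x y) (hc : G.IsWalk c x y) (habc : (a + b + c : Multiset G.E) = univ.val)
    (ha' : a ≠ []) (hb' : b ≠ []) :
    ∃ C : ChainDecomposition dipole3 G, {i | C.weight i = 0}.Subsingleton := by
  have hwalk : ∀ i : Fin 3, G.IsWalk (![a, b, c] i) x y := by
    simp [Fin.forall_fin_succ, ha, hb, hc]
  have hzero : ∀ i : Fin 3, (![a, b, c] i).length = 0 → i = 2 := by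
    simp [Fin.forall_fin_succ, ha', hb']
  let C : ChainDecomposition dipole3 G :=
    ⟨![x, y], ![a, b, c], hwalk, (Fin.sum_univ_three _).trans habc⟩
  exact ⟨C, fun i hi j hj => (hzero i hi).trans (hzero j hj).symm⟩

theorem exists_chainDecomposition_of_nV_eq_one (hV : G.nV = 1) (hE : G.nE = 2) :
    ∃ C : ChainDecomposition dipole3 G, {i | C.weight i = 0}.Subsingleton := by
  obtain ⟨v, hv⟩ := Fintype.card_eq_one_iff.1 hV
  obtain ⟨e, f, hef, hunion⟩ := card_eq_two.1 (card_univ.trans hE : #(univ : Finset G.E) = 2)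
  have hwalk (e : G.E) : G.IsWalk [e] v v := Joins.isWalk (.inl ⟨hv _, hv _⟩)
  refine exists_chainDecomposition_of_isWalk (hwalk e) (hwalk f) (.nil v) ?_ (by simp) (by simp)
  rw [hunion, insert_val_of_notMem (by simpa using hef)]
  rfl

theorem exists_chainDecomposition_of_nV_eq_two (hV : G.nV = 2) (hE : G.nE = 3)
    (hloop : ∀ e, G.src e ≠ G.tgt e) :
    ∃ C : ChainDecomposition dipole3 G, {i | C.weight i = 0}.Subsingleton := by
  obtain ⟨u, v, -, huv⟩ := card_eq_two.1 (card_univ.trans hV : #(univ : Finset G.V) = 2)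
  obtain ⟨e, f, g, hef, heg, hfg, hunion⟩ :=
    card_eq_three.1 (card_univ.trans hE : #(univ : Finset G.E) = 3)
  have hvertex (x : G.V) : x = u ∨ x = v := by simpa [huv] using mem_univ x
  have hwalk (e : G.E) : G.IsWalk [e] u v := by
    refine Joins.isWalk ?_
    have := hloop e
    have := hvertex (G.src e)
    have := hvertex (G.tgt e)
    unfold Joins
    grind
  refine exists_chainDecomposition_of_isWalk (hwalk e) (hwalk f) (hwalk g) ?_ (by simp) (by simp)
  rw [hunion, insert_val_of_notMem (by simp [hef, heg]),
    insert_val_of_notMem (by simpa using hfg)]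
  rfl

theorem two_le_card_cutEdges_singleton (hc : G.Connected) (hb : G.Bridgeless) (hV : 2 ≤ G.nV)
    (v : G.V) : 2 ≤ #(G.cutEdges {v}) := by
  refine two_le_card_cutEdges hc hb (singleton_nonempty v) fun h => ?_
  have := congrArg card h
  rw [card_singleton, card_univ, ← nV] at this
  lia

theorem exists_joins_of_deg_eq_two {v : G.V} (hv : G.deg v = 2) (hcut : 2 ≤ #(G.cutEdges {v})) :
    ∃ e f y z, f ≠ e ∧ y ≠ v ∧ z ≠ v ∧ G.Joins e v y ∧ G.Joins f v z ∧
      ∀ g, g ≠ e → g ≠ f → G.src g ≠ v ∧ G.tgt g ≠ v := by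
  have hdeg := G.deg_eq_card_cutEdges_add v
  have hloop : #{e | G.src e = v ∧ G.tgt e = v} = 0 := by lia
  obtain ⟨e, f, hef, h⟩ := card_eq_two.1 (by lia : #(G.cutEdges {v}) = 2)
  obtain ⟨y, hy, he⟩ := mem_cutEdges_singleton.1 (by simp [h] : e ∈ G.cutEdges {v})
  obtain ⟨z, hz, hf⟩ := mem_cutEdges_singleton.1 (by simp [h] : f ∈ G.cutEdges {v})
  refine ⟨e, f, y, z, hef.symm, hy, hz, he, hf, fun g hge hgf => ?_⟩
  have hg : g ∉ G.cutEdges {v} := by simp [h, hge, hgf]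
  simp only [cutEdges, mem_filter, mem_univ, true_and, mem_singleton] at hg
  simp only [card_eq_zero, filter_eq_empty_iff, mem_univ, true_imp_iff] at hloop
  have := @hloop g
  tauto

theorem exists_deg_eq_two_or (hc : G.Connected) (hb : G.Bridgeless) (hV : 2 ≤ G.nV)
    (hE : G.nE = G.nV + 1) :
    (∃ v, G.deg v = 2) ∨ G.nV = 2 ∧ ∀ e, G.src e ≠ G.tgt e := by
  by_contra! h
  obtain ⟨hdeg, hloop⟩ := h
  have hcut := two_le_card_cutEdges_singleton hc hb hV
  have hthree (v : G.V) : 3 ≤ G.deg v := by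
    have := G.deg_eq_card_cutEdges_add v
    have := hcut v
    have := hdeg v
    lia
  have hconst : ∑ _ : G.V, 3 = 3 * G.nV := by simp [nV, mul_comm]
  have hsum : ∑ v, G.deg v = 2 * G.nE := sum_deg
  have hle : ∑ _ : G.V, 3 ≤ ∑ v, G.deg v := sum_le_sum fun v _ => hthree v
  obtain ⟨e, he⟩ := hloop (by lia)
  have hpos : 0 < #{f | G.src f = G.src e ∧ G.tgt f = G.src e} :=
    card_pos.2 ⟨e, by simp [he]⟩
  have hlt : ∑ _ : G.V, 3 < ∑ v, G.deg v := by
    refine sum_lt_sum (fun v _ => hthree v) ⟨G.src e, mem_univ _, ?_⟩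
    have := G.deg_eq_card_cutEdges_add (G.src e)
    have := hcut (G.src e)
    lia
  lia

theorem exists_chainDecomposition_dipole3 (hc : G.Connected) (hb : G.Bridgeless)
    (hE : G.nE = G.nV + 1) :
    ∃ C : ChainDecomposition dipole3 G, {i | C.weight i = 0}.Subsingleton := by
  induction hn : G.nV generalizing G with
  | zero =>
    have := one_le_nV_of_nE_eq hE
    lia
  | succ n ih =>
    rcases n.eq_zero_or_pos with rfl | hn'
    · exact exists_chainDecomposition_of_nV_eq_one hn (by lia)
    obtain ⟨v, hv⟩ | ⟨hV, hloop⟩ := exists_deg_eq_two_or hc hb (by lia) hE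
    · obtain ⟨e, f, y, z, hfe, hy, hz, he, hf, hv⟩ :=
        exists_joins_of_deg_eq_two hv (two_le_card_cutEdges_singleton hc hb (by lia) v)
      have hends : G.src e ≠ G.tgt e := by
        rcases he with ⟨rfl, rfl⟩ | ⟨rfl, rfl⟩
        exacts [hy.symm, hy]
      have := nV_contract hends
      have := nE_contract (e := e)
      obtain ⟨C, hC⟩ := ih (hc.contract (e := e)) hb.contract (by lia) (by lia)
      obtain ⟨C', hC'⟩ := C.exists_of_contract he hf hfe hz hv
      exact ⟨C', hC.anti hC'⟩
    · exact exists_chainDecomposition_of_nV_eq_two hV (by lia) hloop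

end Multigraph

end Dipole

/-! ### Optimality -/

section Optimality

variable {G H : Multigraph} {w : Fin 3 → ℕ}

theorem ChainDecomposition.isIso_theta (C : ChainDecomposition dipole3 G) (hG : G.Connected)
    (hE : G.nE = G.nV + 1) (hC : {i | C.weight i = 0}.Subsingleton) :
    IsIso (theta C.weight) G := by
  refine C.isIso hG (zeroAcyclic_dipole3 hC) ?_
  have : dipole3.nE = 3 := rfl
  have : dipole3.nV = 2 := rfl
  lia

theorem ChainDecomposition.treeCount_eq (C : ChainDecomposition dipole3 G) (hG : G.Connected)
    (hE : G.nE = G.nV + 1) (hC : {i | C.weight i = 0}.Subsingleton) :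
    G.treeCount = C.weight (0 : Fin 3) * C.weight (1 : Fin 3) +
      C.weight (0 : Fin 3) * C.weight (2 : Fin 3) +
      C.weight (1 : Fin 3) * C.weight (2 : Fin 3) := by
  obtain ⟨I⟩ := C.isIso_theta hG hE hC
  exact I.treeCount_eq.symm.trans (treeCount_theta hC)

theorem exists_treeCount_le (hG : G.Connected) (hE : G.nE = G.nV + 1) :
    ∃ w : Fin 3 → ℕ, ∑ i, w i = G.nE ∧ G.treeCount ≤ w 0 * w 1 + w 0 * w 2 + w 1 * w 2 := by
  induction hn : G.nE generalizing G with
  | zero => lia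
  | succ n ih =>
    by_cases hb : G.Bridgeless
    · obtain ⟨C, hC⟩ := Multigraph.exists_chainDecomposition_dipole3 hG hb hE
      exact ⟨C.weight, C.sum_weight.trans hn, (C.treeCount_eq hG hE hC).le⟩
    · obtain ⟨e, he⟩ : ∃ e, G.IsBridge e := by simpa [Multigraph.Bridgeless] using hb
      have hV := Multigraph.nV_contract (he.src_ne_tgt hG)
      have hE' := Multigraph.nE_contract (e := e)
      obtain ⟨w, hsum, hw⟩ := ih (hG.contract (e := e)) (by lia) (by lia)
      rw [Multigraph.treeCount_contract_of_isBridge hG he] at hw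
      refine ⟨![w 0 + 1, w 1, w 2], ?_, hw.trans ?_⟩
      · rw [Fin.sum_univ_three] at hsum ⊢
        simp only [Matrix.cons_val]
        lia
      · simp only [Matrix.cons_val]
        gcongr <;> lia

theorem BalancedWeights.treeCount_le (hw : BalancedWeights w) (hG : G.Connected)
    (hE : G.nE = G.nV + 1) (hsum : ∑ i, w i = G.nE) :
    G.treeCount ≤ w 0 * w 1 + w 0 * w 2 + w 1 * w 2 := by
  obtain ⟨v, hv, hle⟩ := exists_treeCount_le hG hE
  exact hle.trans (hw.sum_mul_le (hsum.trans hv.symm))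

theorem BalancedWeights.isIso_theta (hw : BalancedWeights w) (hG : G.Connected)
    (hb : G.Bridgeless) (hE : G.nE = G.nV + 1) (hsum : ∑ i, w i = G.nE)
    (htree : G.treeCount = w 0 * w 1 + w 0 * w 2 + w 1 * w 2) : IsIso (theta w) G := by
  obtain ⟨C, hC⟩ := Multigraph.exists_chainDecomposition_dipole3 hG hb hE
  have hsum' : ∑ i, w i = ∑ i, C.weight i := hsum.trans C.sum_weight.symm
  have hbal : BalancedWeights C.weight :=
    (hw.sum_mul_eq_iff hsum').1 ((C.treeCount_eq hG hE hC).symm.trans htree)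
  obtain ⟨σ, rfl⟩ := hw.exists_perm_eq_comp hbal hsum'
  exact (C.perm σ).isIso_theta hG hE (hC.preimage σ.injective)

theorem Multigraph.card_not_isBridge_eq_nE_iff :
    #{e | ¬ G.IsBridge e} = G.nE ↔ G.Bridgeless := by
  rw [nE, ← card_univ, card_filter_eq_iff]
  simp [Bridgeless]

theorem Multigraph.rel_lt_rel (hG : G.Connected) (hH : H.Connected) (hGE : G.nE = G.nV + 1)
    (hHE : H.nE = H.nV + 1) (hE : H.nE = G.nE) (hb : G.Bridgeless)
    (htree : H.treeCount ≤ G.treeCount) (hlt : H.Bridgeless → H.treeCount < G.treeCount)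
    {p : ℝ} (hp0 : 0 < p) (hp1 : p < 1) : H.rel p < G.rel p := by
  have : 0 < 1 - p := sub_pos.2 hp1
  have hG_bridge : #{e | ¬ G.IsBridge e} = H.nE :=
    (card_not_isBridge_eq_nE_iff.2 hb).trans hE.symm
  have hbridge : #{e | ¬ H.IsBridge e} ≤ #{e | ¬ G.IsBridge e} :=
    hG_bridge ▸ card_le_univ _
  rw [rel_eq_of_nE_eq hG hGE, rel_eq_of_nE_eq hH hHE, hE]
  by_cases hHb : H.Bridgeless
  · have := hlt hHb
    refine add_lt_add_of_le_of_lt ?_ ?_ <;> gcongr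
  · have : #{e | ¬ H.IsBridge e} < #{e | ¬ G.IsBridge e} := hbridge.lt_of_ne fun heq =>
      hHb (card_not_isBridge_eq_nE_iff.1 (heq.trans hG_bridge))
    refine add_lt_add_of_lt_of_le ?_ ?_ <;> gcongr

theorem BalancedWeights.rel_lt_rel_theta (hw : BalancedWeights w)
    (hw' : {i | w i = 0}.Subsingleton) (hH : H.Connected) (hE : H.nE = H.nV + 1)
    (hsum : w 0 + w 1 + w 2 = H.nE) (hiso : ¬ IsIso (theta w) H) {p : ℝ} (hp0 : 0 < p)
    (hp1 : p < 1) : H.rel p < (theta w).rel p := by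
  have hHθ : H.nE = (theta w).nE := hsum.symm.trans nE_theta.symm
  rw [← Fin.sum_univ_three] at hsum
  have hle : H.treeCount ≤ (theta w).treeCount :=
    (hw.treeCount_le hH hE hsum).trans_eq (treeCount_theta hw').symm
  refine Multigraph.rel_lt_rel connected_theta hH (nE_theta_eq_nV_add_one hw') hE hHθ
    bridgeless_theta hle (fun hb => hle.lt_of_ne fun heq => hiso ?_) hp0 hp1
  exact hw.isIso_theta hH hb hE hsum (heq.trans (treeCount_theta hw'))

theorem rel_theta (hw : {i | w i = 0}.Subsingleton) (p : ℝ) :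
    (theta w).rel p = p ^ (w 0 + w 1 + w 2) +
      ((w 0 + w 1 + w 2 : ℕ) : ℝ) * p ^ (w 0 + w 1 + w 2 - 1) * (1 - p) +
      ((w 0 * w 1 + w 0 * w 2 + w 1 * w 2 : ℕ) : ℝ) * p ^ (w 0 + w 1 + w 2 - 2) * (1 - p) ^ 2 := by
  rw [Multigraph.rel_eq_of_nE_eq connected_theta (nE_theta_eq_nV_add_one hw),
    Multigraph.card_not_isBridge_eq_nE_iff.2 bridgeless_theta, treeCount_theta hw, nE_theta]

theorem BalancedWeights.uniquelyOptimal_theta (hw : BalancedWeights w)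
    (hw' : {i | w i = 0}.Subsingleton) {n : ℕ} (hsum : w 0 + w 1 + w 2 = n + 1) :
    UniquelyOptimal (theta w) n (n + 1) := by
  have hE := nE_theta (w := w)
  have hV := nE_theta_eq_nV_add_one hw'
  refine ⟨⟨by lia, by lia, connected_theta⟩, ?_⟩
  rintro H ⟨hHV, hHE, hH⟩ hiso p hp0 hp1
  exact hw.rel_lt_rel_theta hw' hH (by lia) (by lia) hiso hp0 hp1

theorem IsIso.refl (G : Multigraph) : IsIso G G :=
  ⟨⟨.refl _, .refl _, fun _ => .inl ⟨rfl, rfl⟩⟩⟩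

end Optimality

/-- for m = n + 1 the balanced θ-graph (balanced weak subdivision of the
3-dipole) is uniquely optimal; its reliability is the displayed polynomial, and the
coefficient ℓ₁ℓ₂ + ℓ₁ℓ₃ + ℓ₂ℓ₃ is maximized exactly at balanced chain lengths. -/
theorem balanced_theta_uniquely_optimal (n m : ℕ) (hn : 1 ≤ n) (hm : m = n + 1) :
    ∃ (G : Multigraph) (w : Fin 3 → ℕ),
      IsWeakSubdivision G dipole3 w ∧ (w 0 + w 1 + w 2 = m) ∧ BalancedWeights w ∧
      UniquelyOptimal G n m ∧
      (∀ p : ℝ, 0 < p → p < 1 →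
        G.rel p = p ^ m + (m : ℝ) * p ^ (m - 1) * (1 - p) +
          ((w 0 * w 1 + w 0 * w 2 + w 1 * w 2 : ℕ) : ℝ) * p ^ (m - 2) * (1 - p) ^ 2) ∧
      (∀ w' : Fin 3 → ℕ, w' 0 + w' 1 + w' 2 = m →
        (w' 0 * w' 1 + w' 0 * w' 2 + w' 1 * w' 2 ≤
            w 0 * w 1 + w 0 * w 2 + w 1 * w 2) ∧
        (w' 0 * w' 1 + w' 0 * w' 2 + w' 1 * w' 2 =
            w 0 * w 1 + w 0 * w 2 + w 1 * w 2 ↔ BalancedWeights w')) := by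
  obtain ⟨w, hsum, hw⟩ := exists_balancedWeights m
  have hzero : {i | w i = 0}.Subsingleton := hw.subsingleton_eq_zero (by lia)
  have hopt : UniquelyOptimal (theta w) n m :=
    hm ▸ hw.uniquelyOptimal_theta hzero (hsum.trans hm)
  have hrel (p : ℝ) := hsum ▸ rel_theta hzero p
  have hsum_eq {w' : Fin 3 → ℕ} (h : w' 0 + w' 1 + w' 2 = m) : ∑ i, w i = ∑ i, w' i := by
    rw [Fin.sum_univ_three, Fin.sum_univ_three, hsum, h]
  exact ⟨theta w, w, ⟨zeroAcyclic_dipole3 hzero, .refl _⟩, hsum, hw, hopt, fun p _ _ => hrel p,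
    fun w' h => ⟨hw.sum_mul_le (hsum_eq h), hw.sum_mul_eq_iff (hsum_eq h)⟩⟩
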